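/- Let X be a length space, let V ⊆ X be an open set, and let w : X → ℝ be Lipschitz. Then Lip_V w ≤ max( sup_{x ∈ V} Lip_x w , Lip_{∂V} w ), where Lip_x w := inf{Lip_W w : W ⊆ X open, x ∈ W}. -/

import Mathlib

open Metric Set

noncomputable section

/-- The length of a continuous path: its total variation. -/
def pathLength {X : Type*} [MetricSpace X] {x y : X} (γ : Path x y) : ENNReal :=
  eVariationOn (fun t => γ t) (Set.univ : Set unitInterval)

/-- A metric space is a length space if the distance between any two points equals the
infimum of the lengths of continuous paths joining them. -/
def IsLengthSpace (X : Type*) [MetricSpace X] : Prop :=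
  ∀ x y : X, edist x y = ⨅ γ : Path x y, pathLength γ

/-- The (possibly infinite) Lipschitz constant of `u` on `S`:
`Lip_S u = sup {|u x - u y| / d(x,y) : x, y ∈ S, x ≠ y}`. -/
def lipOn {X : Type*} [MetricSpace X] (u : X → ℝ) (S : Set X) : ENNReal :=
  ⨆ (x : X) (_ : x ∈ S) (y : X) (_ : y ∈ S) (_ : x ≠ y),
    ENNReal.ofReal (|u x - u y| / dist x y)

/-- `u : X → ℝ` is an absolutely minimal (AM) extension of `F` prescribed on `Y`:
`u` is Lipschitz, `u = F` on `Y`, and `Lip_U u = Lip_{∂U} u` for every open `U ⊆ X \ Y`. -/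
def IsAMExtension {X : Type*} [MetricSpace X] (Y : Set X) (F u : X → ℝ) : Prop :=
  lipOn u Set.univ < ⊤ ∧ Set.EqOn u F Y ∧
    ∀ U : Set X, IsOpen U → U ⊆ Yᶜ → lipOn u U = lipOn u (frontier U)

/-- The pointwise Lipschitz constant `Lip_x u = inf {Lip_W u : W open, x ∈ W}`. -/
def lipAt {X : Type*} [MetricSpace X] (u : X → ℝ) (x : X) : ENNReal :=
  ⨅ (W : Set X) (_ : IsOpen W) (_ : x ∈ W), lipOn u W

/-!
Let `C` exceed the right-hand side. Join two points of `closure V` by a curve whose length is almost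
their distance. Either the curve stays in `interior V`, or it has a first and a last point on
`frontier V`. Before the first and after the last it runs in `interior V`, where `w` is locally
`C`-Lipschitz, so there its image under `w` is at most `C` times as long as the curve itself;
between the two, the Lipschitz bound on the frontier applies directly. Adding up, the values of `w`
at the endpoints differ by at most `C` times the length of the whole curve.
-/

open scoped NNReal Topology

lemma eVariationOn_Icc_add_Icc {α E : Type*} [LinearOrder α] [PseudoEMetricSpace E] (g : α → E)
    {a b c : α} (hab : a ≤ b) (hbc : b ≤ c) :
    eVariationOn g (Icc a b) + eVariationOn g (Icc b c) = eVariationOn g (Icc a c) := by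
  simpa only [univ_inter] using eVariationOn.Icc_add_Icc g hab hbc (mem_univ b)

lemma edist_le_eVariationOn_Ioo {α E : Type*} [LinearOrder α] [DenselyOrdered α]
    [TopologicalSpace α] [OrderTopology α] [PseudoEMetricSpace E] {f : α → E} {a b : α}
    (hab : a < b) (hf : ContinuousOn f (Icc a b)) :
    edist (f a) (f b) ≤ eVariationOn f (Ioo a b) := by
  rw [← closure_Ioo hab.ne] at hf
  have hmem {r : α} (hr : r ∈ Icc a b) : f r ∈ closure (f '' Ioo a b) :=
    hf.image_closure (mem_image_of_mem f (by rwa [closure_Ioo hab.ne]))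
  calc edist (f a) (f b)
    _ ≤ ediam (closure (f '' Ioo a b)) :=
        edist_le_ediam_of_mem (hmem (left_mem_Icc.2 hab.le)) (hmem (right_mem_Icc.2 hab.le))
    _ = ediam (f '' Ioo a b) := ediam_closure _
    _ ≤ eVariationOn f (Ioo a b) :=
        ediam_image_le_iff.2 fun _ hx _ hy => eVariationOn.edist_le f hx hy

section LocallyLipschitz

variable {E F : Type*} [PseudoEMetricSpace E] [PseudoEMetricSpace F]
  {C : ℝ≥0} {f : E → F} {U : Set E} {g : ℝ → E} {s : Set ℝ} {a b : ℝ}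

/-- `f` is locally Lipschitz on `U` with one constant `C` for all points of `U`. As in Mathlib's
`LocallyLipschitzOn`, the neighborhoods are relative to `U`. -/
def LocallyLipschitzOnWith (C : ℝ≥0) (f : E → F) (U : Set E) : Prop :=
  ∀ x ∈ U, ∃ W ∈ 𝓝[U] x, LipschitzOnWith C f W

lemma LocallyLipschitzOnWith.eVariationOn_comp_Icc_le (hf : LocallyLipschitzOnWith C f U)
    (hg : ContinuousOn g (Icc a b)) (hgU : MapsTo g (Icc a b) U) :
    eVariationOn (f ∘ g) (Icc a b) ≤ C * eVariationOn g (Icc a b) := by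
  rcases lt_or_ge b a with hba | hab
  · simp [Icc_eq_empty hba.not_ge]
  choose W hW hfW using fun r : Icc a b => hf (g r) (hgU r.2)
  have hnhds (r : Icc a b) : {p : Icc a b | g p ∈ W r} ∈ 𝓝 r :=
    preimage_coe_mem_nhds_subtype.2 ((hg r r.2).tendsto_nhdsWithin hgU (hW r))
  obtain ⟨t, ht_zero, ht_mono, ⟨n, ht_n⟩, ht_sub⟩ := exists_monotone_Icc_subset_open_cover_Icc hab
    (c := fun r => interior {p : Icc a b | g p ∈ W r}) (fun _ => isOpen_interior)
    (fun r _ => mem_iUnion.2 ⟨r, mem_interior_iff_mem_nhds.2 (hnhds r)⟩)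
  have hpiece (i : ℕ) : eVariationOn (f ∘ g) (Icc (t i : ℝ) (t (i + 1))) ≤
      C * eVariationOn g (Icc (t i : ℝ) (t (i + 1))) := by
    obtain ⟨r, hr⟩ := ht_sub i
    refine (hfW r).comp_eVariationOn_le fun p hp => ?_
    have hp_mem : p ∈ Icc a b := ⟨(t i).2.1.trans hp.1, hp.2.trans (t (i + 1)).2.2⟩
    exact interior_subset (s := {q : Icc a b | g q ∈ W r}) (hr (a := ⟨p, hp_mem⟩) hp)
  calc eVariationOn (f ∘ g) (Icc a b)
    _ = ∑ i ∈ Finset.range n, eVariationOn (f ∘ g) (Icc (t i : ℝ) (t (i + 1))) := by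
        rw [eVariationOn.sum' (f ∘ g) (I := fun i => (t i : ℝ)) ht_mono, ht_zero, ht_n n le_rfl]
    _ ≤ ∑ i ∈ Finset.range n, C * eVariationOn g (Icc (t i : ℝ) (t (i + 1))) :=
        Finset.sum_le_sum fun i _ => hpiece i
    _ = C * eVariationOn g (Icc a b) := by
        rw [← Finset.mul_sum, eVariationOn.sum' g (I := fun i => (t i : ℝ)) ht_mono, ht_zero,
          ht_n n le_rfl]

lemma LocallyLipschitzOnWith.eVariationOn_comp_le (hf : LocallyLipschitzOnWith C f U)
    (hs : s.OrdConnected) (hg : ContinuousOn g s) (hgU : MapsTo g s U) :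
    eVariationOn (f ∘ g) s ≤ C * eVariationOn g s := by
  rw [eVariationOn.eq_biSup_inter_Icc]
  refine iSup₂_le fun ⟨p, q⟩ ⟨hp, hq, _⟩ => ?_
  have hpq : Icc p q ⊆ s := hs.out hp hq
  calc eVariationOn (f ∘ g) (s ∩ Icc p q)
    _ = eVariationOn (f ∘ g) (Icc p q) := by rw [inter_eq_right.2 hpq]
    _ ≤ C * eVariationOn g (Icc p q) :=
        hf.eVariationOn_comp_Icc_le (hg.mono hpq) (hgU.mono_left hpq)
    _ ≤ C * eVariationOn g s := by gcongr; exact eVariationOn.mono g hpq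

lemma LocallyLipschitzOnWith.edist_comp_le (hf : LocallyLipschitzOnWith C f U)
    (hfc : ContinuousOn f (closure U)) (hab : a ≤ b) (hg : ContinuousOn g (Icc a b))
    (hgU : MapsTo g (Ioo a b) U) :
    edist (f (g a)) (f (g b)) ≤ C * eVariationOn g (Icc a b) := by
  rcases hab.eq_or_lt with rfl | hab
  · simp
  have hg_closure : MapsTo g (Icc a b) (closure U) := by
    rw [← closure_Ioo hab.ne] at hg ⊢
    exact hgU.closure_of_continuousOn hg
  calc edist (f (g a)) (f (g b))
    _ ≤ eVariationOn (f ∘ g) (Ioo a b) :=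
        edist_le_eVariationOn_Ioo hab (hfc.comp hg hg_closure)
    _ ≤ C * eVariationOn g (Ioo a b) :=
        hf.eVariationOn_comp_le ordConnected_Ioo (hg.mono Ioo_subset_Icc_self) hgU
    _ ≤ C * eVariationOn g (Icc a b) := by
        gcongr
        exact eVariationOn.mono g Ioo_subset_Icc_self

end LocallyLipschitz

section Frontier

variable {T : Type*} [TopologicalSpace T] {V : Set T}

lemma subset_interior_of_isPreconnected_of_disjoint_frontier {s : Set T} (hs : IsPreconnected s)
    (hne : (s ∩ closure V).Nonempty) (hdisj : Disjoint s (frontier V)) : s ⊆ interior V := by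
  have hinterior : ∀ x ∈ s, x ∈ closure V → x ∈ interior V := fun x hxs hxV =>
    by_contra fun hx => hdisj.notMem_of_mem_left hxs ⟨hxV, hx⟩
  obtain ⟨x, hxs, hxV⟩ := hne
  exact hs.subset_of_closure_inter_subset isOpen_interior ⟨x, hxs, hinterior x hxs hxV⟩
    fun y hy => hinterior y hy.2 (closure_mono interior_subset hy.1)

variable {α : Type*} [ConditionallyCompleteLinearOrder α] [DenselyOrdered α] [TopologicalSpace α]
  [OrderTopology α] {g : α → T} {a b : α}

lemma mapsTo_interior_or_exists_mem_frontier (hab : a ≤ b) (hg : ContinuousOn g (Icc a b))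
    (ha : g a ∈ closure V) (hb : g b ∈ closure V) :
    MapsTo g (Icc a b) (interior V) ∨
      ∃ s t, a ≤ s ∧ s ≤ t ∧ t ≤ b ∧ g s ∈ frontier V ∧ g t ∈ frontier V ∧
        MapsTo g (Ico a s) (interior V) ∧ MapsTo g (Ioc t b) (interior V) := by
  have mapsTo_interior {J : Set α} (hJ : IsPreconnected J) (hJab : J ⊆ Icc a b) {c : α}
      (hcJ : c ∈ J) (hc : g c ∈ closure V) (hdisj : ∀ r ∈ J, g r ∉ frontier V) :
      MapsTo g J (interior V) :=
    mapsTo_iff_image_subset.2 <| subset_interior_of_isPreconnected_of_disjoint_frontier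
      (hJ.image g (hg.mono hJab)) ⟨g c, mem_image_of_mem g hcJ, hc⟩
      (disjoint_left.2 (forall_mem_image.2 hdisj))
  have hcompact : IsCompact (Icc a b ∩ g ⁻¹' frontier V) :=
    isCompact_Icc.of_isClosed_subset (hg.preimage_isClosed_of_isClosed isClosed_Icc
      isClosed_frontier) inter_subset_left
  rcases (Icc a b ∩ g ⁻¹' frontier V).eq_empty_or_nonempty with hempty | hne
  · exact .inl <| mapsTo_interior isPreconnected_Icc Subset.rfl (left_mem_Icc.2 hab) ha
      fun r hr hrV => (hempty.subset ⟨hr, hrV⟩ : r ∈ (∅ : Set α))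
  obtain ⟨s, ⟨hs, hsV⟩, hs_least⟩ := hcompact.exists_isLeast hne
  obtain ⟨t, ⟨ht, htV⟩, ht_greatest⟩ := hcompact.exists_isGreatest hne
  refine .inr ⟨s, t, hs.1, hs_least ⟨ht, htV⟩, ht.2, hsV, htV, ?_, ?_⟩
  · rcases hs.1.eq_or_lt with rfl | has
    · rw [Ico_self]
      exact mapsTo_empty g _
    have hsub : Ico a s ⊆ Icc a b := fun r hr => ⟨hr.1, hr.2.le.trans hs.2⟩
    exact mapsTo_interior isPreconnected_Ico hsub (left_mem_Ico.2 has) ha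
      fun r hr hrV => hr.2.not_ge (hs_least ⟨hsub hr, hrV⟩)
  · rcases ht.2.eq_or_lt with rfl | htb
    · rw [Ioc_self]
      exact mapsTo_empty g _
    have hsub : Ioc t b ⊆ Icc a b := fun r hr => ⟨ht.1.trans hr.1.le, hr.2⟩
    exact mapsTo_interior isPreconnected_Ioc hsub (right_mem_Ioc.2 htb) hb
      fun r hr hrV => hr.1.not_ge (ht_greatest ⟨hsub hr, hrV⟩)

end Frontier

lemma LocallyLipschitzOnWith.edist_comp_le_of_lipschitzOnWith_frontier {E F : Type*}
    [PseudoEMetricSpace E] [PseudoEMetricSpace F] {C : ℝ≥0} {f : E → F} {V : Set E} {g : ℝ → E}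
    {a b : ℝ} (hloc : LocallyLipschitzOnWith C f (interior V))
    (hfr : LipschitzOnWith C f (frontier V)) (hf : ContinuousOn f (closure V)) (hab : a ≤ b)
    (hg : ContinuousOn g (Icc a b)) (ha : g a ∈ closure V) (hb : g b ∈ closure V) :
    edist (f (g a)) (f (g b)) ≤ C * eVariationOn g (Icc a b) := by
  have hf_int : ContinuousOn f (closure (interior V)) := hf.mono (closure_mono interior_subset)
  rcases mapsTo_interior_or_exists_mem_frontier hab hg ha hb with
    hgV | ⟨s, t, has, hst, htb, hs, ht, hg_left, hg_right⟩
  · exact hloc.edist_comp_le hf_int hab hg (hgV.mono_left Ioo_subset_Icc_self)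
  have hleft : edist (f (g a)) (f (g s)) ≤ C * eVariationOn g (Icc a s) :=
    hloc.edist_comp_le hf_int has (hg.mono (Icc_subset_Icc_right (hst.trans htb)))
      (hg_left.mono_left Ioo_subset_Ico_self)
  have hmiddle : edist (f (g s)) (f (g t)) ≤ C * eVariationOn g (Icc s t) := by
    grw [hfr hs ht, eVariationOn.edist_le g (left_mem_Icc.2 hst) (right_mem_Icc.2 hst)]
  have hright : edist (f (g t)) (f (g b)) ≤ C * eVariationOn g (Icc t b) :=
    hloc.edist_comp_le hf_int htb (hg.mono (Icc_subset_Icc_left (has.trans hst)))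
      (hg_right.mono_left Ioo_subset_Ioc_self)
  calc edist (f (g a)) (f (g b))
    _ ≤ edist (f (g a)) (f (g s)) + edist (f (g s)) (f (g t)) + edist (f (g t)) (f (g b)) :=
        edist_triangle4 _ _ _ _
    _ ≤ C * eVariationOn g (Icc a s) + C * eVariationOn g (Icc s t) +
          C * eVariationOn g (Icc t b) := by gcongr
    _ = C * eVariationOn g (Icc a b) := by
        rw [← mul_add, ← mul_add, eVariationOn_Icc_add_Icc g has hst,
          eVariationOn_Icc_add_Icc g (has.trans hst) htb]

section LengthSpace

variable {X : Type*} [MetricSpace X]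

lemma eVariationOn_extend_eq_pathLength {x y : X} (γ : Path x y) :
    eVariationOn γ.extend (Icc 0 1) = pathLength γ := by
  have hcomp := eVariationOn.comp_eq_of_monotoneOn γ.extend
    ((↑) : unitInterval → ℝ) ((Subtype.mono_coe _).monotoneOn univ)
  rw [image_univ, Subtype.range_coe] at hcomp
  simpa [Function.comp_def, pathLength] using hcomp.symm

lemma IsLengthSpace.le_mul_edist (hX : IsLengthSpace X) {x y : X} {C : ℝ≥0} {r : ENNReal}
    (h : ∀ γ : Path x y, r ≤ C * pathLength γ) : r ≤ C * edist x y := by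
  have hpath : Nonempty (Path x y) := by
    by_contra hempty
    rw [not_nonempty_iff] at hempty
    exact edist_ne_top x y ((hX x y).trans (iInf_of_empty _))
  rw [hX x y, ENNReal.mul_iInf fun hC => absurd hC ENNReal.coe_ne_top]
  exact le_iInf h

lemma IsLengthSpace.lipschitzOnWith_closure {F : Type*} [PseudoEMetricSpace F]
    (hX : IsLengthSpace X) {C : ℝ≥0} {f : X → F} {V : Set X}
    (hloc : LocallyLipschitzOnWith C f (interior V)) (hfr : LipschitzOnWith C f (frontier V))
    (hf : ContinuousOn f (closure V)) : LipschitzOnWith C f (closure V) := by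
  intro x hx y hy
  refine hX.le_mul_edist fun γ => ?_
  simpa [eVariationOn_extend_eq_pathLength] using
    hloc.edist_comp_le_of_lipschitzOnWith_frontier hfr hf zero_le_one
      γ.continuous_extend.continuousOn (by simpa using hx) (by simpa using hy)

variable {u : X → ℝ} {S T : Set X} {C : ℝ≥0}

lemma lipOn_le_coe_iff : lipOn u S ≤ C ↔ LipschitzOnWith C u S := by
  have hquot {x y : X} (hxy : x ≠ y) :
      ENNReal.ofReal (|u x - u y| / dist x y) ≤ C ↔ edist (u x) (u y) ≤ C * edist x y := by
    rw [ENNReal.ofReal_div_of_pos (dist_pos.2 hxy), ← Real.dist_eq, ← edist_dist, ← edist_dist,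
      ENNReal.div_le_iff (edist_pos.2 hxy).ne' (edist_ne_top x y)]
  simp only [lipOn, iSup_le_iff]
  refine forall₄_congr fun x _ y _ => ?_
  rcases eq_or_ne x y with rfl | hxy
  · simp
  · simp [hxy, hquot hxy]

lemma lipOn_mono (hST : S ⊆ T) : lipOn u S ≤ lipOn u T :=
  iSup₂_le fun x hx => iSup₂_le fun y hy =>
    le_iSup₂_of_le x (hST hx) (le_iSup₂_of_le y (hST hy) le_rfl)

lemma locallyLipschitzOnWith_of_lipAt_lt (h : ∀ x ∈ S, lipAt u x < C) :
    LocallyLipschitzOnWith C u S := by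
  intro x hx
  have hx_lt := h x hx
  simp only [lipAt, iInf_lt_iff] at hx_lt
  obtain ⟨W, hW, hxW, hWC⟩ := hx_lt
  exact ⟨W, mem_nhdsWithin_of_mem_nhds (hW.mem_nhds hxW), lipOn_le_coe_iff.1 hWC.le⟩

theorem stmt19_general (hX : IsLengthSpace X) (V : Set X) (w : X → ℝ)
    (hw : ContinuousOn w (closure V)) :
    lipOn w (closure V) ≤ max (⨆ x ∈ interior V, lipAt w x) (lipOn w (frontier V)) := by
  refine le_of_not_gt fun hlt => ?_
  obtain ⟨C, hC, hC_lt⟩ := ENNReal.lt_iff_exists_nnreal_btwn.1 hlt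
  obtain ⟨hlip, hfr⟩ := max_lt_iff.1 hC
  have hloc : LocallyLipschitzOnWith C w (interior V) := locallyLipschitzOnWith_of_lipAt_lt
    fun x hx => (le_iSup₂ (f := fun x (_ : x ∈ interior V) => lipAt w x) x hx).trans_lt hlip
  exact hC_lt.not_ge <| lipOn_le_coe_iff.2 <|
    hX.lipschitzOnWith_closure hloc (lipOn_le_coe_iff.1 hfr.le) hw

end LengthSpace

/-- In a length space, for an open set `V` and a Lipschitz `w`,
`Lip_V w ≤ max (sup_{x ∈ V} Lip_x w) (Lip_{∂V} w)`. -/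
theorem stmt19 {X : Type*} [MetricSpace X] (hX : IsLengthSpace X)
    (V : Set X) (hV : IsOpen V) (w : X → ℝ) (hw : ∃ K : NNReal, LipschitzWith K w) :
    lipOn w V ≤ max (⨆ x ∈ V, lipAt w x) (lipOn w (frontier V)) := by
  obtain ⟨K, hK⟩ := hw
  simpa only [hV.interior_eq] using
    (lipOn_mono subset_closure).trans (stmt19_general hX V w hK.continuous.continuousOn)

end
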